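/- Let σ : ℝ → ℝ be an activation such that INAL(M_{k'}, σ) = Ω(n^{-k₀}) for every k' = 0, 1, …, k, where M_{k'}(x) = ∏_{i=1}^{k'} x_i. Then for any sequence of functions f_n : {±1}^n → ℝ, the low-degree Fourier weight satisfies W^{≤k}(f_n) ≤ INAL(f_n, σ) · O(n^{k₀}). -/

import Mathlib

open MeasureTheory ProbabilityTheory Filter Finset Asymptotics
open scoped NNReal ENNReal

noncomputable section

/-- The ±1 value encoded by a Boolean bit. -/
def bsign (b : Bool) : ℝ := if b then 1 else -1

/-- Expectation over a uniformly random point of the Boolean cube `{±1}^n`. -/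
def bExp (n : ℕ) (g : (Fin n → Bool) → ℝ) : ℝ :=
  (∑ x : Fin n → Bool, g x) / 2 ^ n

/-- A function on the Boolean cube is Boolean(-valued) if it takes values in `{±1}`. -/
def IsBooleanFn {n : ℕ} (f : (Fin n → Bool) → ℝ) : Prop := ∀ x, f x = 1 ∨ f x = -1

/-- Initialization distribution: the weights `w : ℝⁿ` and the bias `b` are
iid `N(0, 1/n)` Gaussians. -/
def initMeasure (n : ℕ) : Measure ((Fin n → ℝ) × ℝ) :=
  (Measure.pi fun _ : Fin n => gaussianReal 0 (n : ℝ≥0)⁻¹).prod (gaussianReal 0 (n : ℝ≥0)⁻¹)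

/-- Initial alignment `INAL(f, σ) = E_{w,b} [ (E_x [f(x) σ(wᵀx + b)])² ]`. -/
def INAL (n : ℕ) (f : (Fin n → Bool) → ℝ) (σ : ℝ → ℝ) : ℝ :=
  ∫ θ : (Fin n → ℝ) × ℝ,
    (bExp n fun x => f x * σ (∑ i, θ.1 i * bsign (x i) + θ.2)) ^ 2 ∂ initMeasure n

/-- The `v`-Gaussian smoothing `Σ_v(t) = E_{Y ∼ N(0,v)} [σ(Y + t)]`. -/
def gsmooth (σ : ℝ → ℝ) (v : ℝ) (t : ℝ) : ℝ :=
  ∫ y, σ (y + t) ∂ gaussianReal 0 v.toNNReal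

/-- `σ` is polynomially bounded: `|σ(x)| ≤ C |x|^c + C` for some `C, c > 0`. -/
def PolyBounded (σ : ℝ → ℝ) : Prop :=
  ∃ C : ℝ, 0 < C ∧ ∃ c : ℕ, 0 < c ∧ ∀ x : ℝ, |σ x| ≤ C * |x| ^ c + C

/-- `σ` is expressive: measurable, polynomially bounded, and its Gaussian smoothing has no
two consecutive vanishing derivatives at `0`. -/
def Expressive (σ : ℝ → ℝ) : Prop :=
  Measurable σ ∧ PolyBounded σ ∧
    ∀ m : ℕ, iteratedDeriv m (gsmooth σ 1) 0 ≠ 0 ∨ iteratedDeriv (m + 1) (gsmooth σ 1) 0 ≠ 0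

/-- A nonnegative sequence is negligible if it decays faster than any inverse polynomial. -/
def Negligible (g : ℕ → ℝ) : Prop :=
  ∀ c : ℕ, Tendsto (fun n : ℕ => (n : ℝ) ^ c * g n) atTop (nhds 0)

/-- Fourier character `M_S(x) = ∏_{i ∈ S} x_i`. -/
def chi {n : ℕ} (S : Finset (Fin n)) (x : Fin n → Bool) : ℝ := ∏ i ∈ S, bsign (x i)

/-- Fourier coefficient `f̂(S) = E_x [f(x) M_S(x)]`. -/
def fourierCoef (n : ℕ) (f : (Fin n → Bool) → ℝ) (S : Finset (Fin n)) : ℝ :=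
  bExp n fun x => f x * chi S x

/-- Fourier weight up to degree `k`: `W^{≤k}(f)`. -/
def weightLE (n k : ℕ) (f : (Fin n → Bool) → ℝ) : ℝ :=
  ∑ S ∈ Finset.univ.filter (fun S : Finset (Fin n) => S.card ≤ k), fourierCoef n f S ^ 2

/-- Fourier weight strictly below degree `k`: `W^{<k}(f)`. -/
def weightLT (n k : ℕ) (f : (Fin n → Bool) → ℝ) : ℝ :=
  ∑ S ∈ Finset.univ.filter (fun S : Finset (Fin n) => S.card < k), fourierCoef n f S ^ 2

/-- The monomial `M_k(x) = ∏_{i=1}^k x_i`, viewed as a function on `{±1}^n`. -/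
def monomial (n k : ℕ) : (Fin n → Bool) → ℝ :=
  fun x => ∏ i ∈ Finset.univ.filter (fun i : Fin n => (i : ℕ) < k), bsign (x i)

/-- The `N`-extension of `f : {±1}^n → ℝ` (for `n ≤ N`): ignore the last `N - n` coordinates. -/
def extendFn (n N : ℕ) (f : (Fin n → Bool) → ℝ) : (Fin N → Bool) → ℝ :=
  fun x => f fun i => if h : (i : ℕ) < N then x ⟨i, h⟩ else false

/-- Cross-predictability of (the uniform distribution on) the orbit of `f` under coordinate
permutations, with uniform inputs: `CP(orb(f), U^N)`. -/
def orbitCP (N : ℕ) (f : (Fin N → Bool) → ℝ) : ℝ :=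
  (∑ π : Equiv.Perm (Fin N), ∑ π' : Equiv.Perm (Fin N),
      (bExp N fun x => f (fun i => x (π i)) * f (fun i => x (π' i))) ^ 2) /
    (Fintype.card (Equiv.Perm (Fin N))) ^ 2

/-- `N = n^{1+ε}` (rounded up). -/
def Ndim (ε : ℝ) (n : ℕ) : ℕ := ⌈(n : ℝ) ^ (1 + ε)⌉₊

/-!
Sign changes of the coordinates preserve the initialization distribution, so the alignments of
distinct Fourier characters with a random neuron are orthogonal in `L²`; it is also invariant under
permutations, so `INAL(M_S, σ)` depends only on `|S|`. Hence
`INAL(f, σ) = ∑ S, f̂(S)² INAL(M_{|S|}, σ)`, and keeping the terms with `|S| ≤ k` gives the bound.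

The expansion requires `σ(wᵀx + b)` to be square-integrable for each `x`, while `σ` is not even
assumed measurable. Since `INAL(M_0, σ) ≠ 0`, the Bochner integral defining it is not the junk
value `0`, so `∑ x, σ(wᵀx + b)` is square-integrable. By Fubini, linear combinations of translates
remove the weights one at a time and isolate `σ`, which is thus in `L²` of some centred Gaussian
of possibly small variance. That variance is then enlarged: conditionally on the part of `(w, b)`
orthogonal to `(1, …, 1)`, every summand with `x ≠ (1, …, 1)` evaluates `σ` on a strictly
contracted Gaussian, so it is in `L²` for a larger variance, hence so is the remaining summand.
-/

section GaussianMeasures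

lemma exists_gaussianPDFReal_le_mul (m₁ m₂ : ℝ) {v₁ v₂ : ℝ≥0} (hv₁ : v₁ ≠ 0) (hv : v₁ < v₂) :
    ∃ K, 0 ≤ K ∧ ∀ x, gaussianPDFReal m₁ v₁ x ≤ K * gaussianPDFReal m₂ v₂ x := by
  have hv₁' : (0 : ℝ) < v₁ := by positivity
  have hv' : (0 : ℝ) < v₂ - v₁ := sub_pos.2 (by exact_mod_cast hv)
  have hv₂' : (0 : ℝ) < v₂ := by linarith
  refine ⟨(√(2 * Real.pi * v₁))⁻¹ * √(2 * Real.pi * v₂) *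
    Real.exp ((m₁ - m₂) ^ 2 / (2 * (v₂ - v₁))), by positivity, fun x => ?_⟩
  have hexp : -(x - m₁) ^ 2 / (2 * v₁) ≤
      (m₁ - m₂) ^ 2 / (2 * (v₂ - v₁)) + -(x - m₂) ^ 2 / (2 * v₂) := by
    have hsq : (m₁ - m₂) ^ 2 / (2 * (v₂ - v₁)) + -(x - m₂) ^ 2 / (2 * v₂) -
        -(x - m₁) ^ 2 / (2 * v₁) =
        ((v₂ - v₁) * (x - m₁) - v₁ * (m₁ - m₂)) ^ 2 / (2 * v₁ * v₂ * (v₂ - v₁)) := by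
      field_simp
      ring
    rw [← sub_nonneg, hsq]
    positivity
  calc gaussianPDFReal m₁ v₁ x
      ≤ (√(2 * Real.pi * v₁))⁻¹ *
        Real.exp ((m₁ - m₂) ^ 2 / (2 * (v₂ - v₁)) + -(x - m₂) ^ 2 / (2 * v₂)) := by
        rw [gaussianPDFReal]
        gcongr
    _ = _ := by
        rw [gaussianPDFReal, Real.exp_add]
        field_simp

lemma exists_gaussianReal_le_smul_gaussianReal (m₁ m₂ : ℝ) {v₁ v₂ : ℝ≥0} (hv₁ : v₁ ≠ 0)
    (hv : v₁ < v₂) : ∃ C : ℝ≥0∞, C ≠ ∞ ∧ gaussianReal m₁ v₁ ≤ C • gaussianReal m₂ v₂ := by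
  obtain ⟨K, hK, hpdf⟩ := exists_gaussianPDFReal_le_mul m₁ m₂ hv₁ hv
  refine ⟨ENNReal.ofReal K, ENNReal.ofReal_ne_top, ?_⟩
  rw [gaussianReal_of_var_ne_zero _ hv₁, gaussianReal_of_var_ne_zero _ (hv₁.bot_lt.trans hv).ne',
    ← withDensity_smul _ (measurable_gaussianPDF _ _)]
  refine withDensity_mono (ae_of_all _ fun x => ?_)
  rw [Pi.smul_apply, smul_eq_mul, gaussianPDF, gaussianPDF, ← ENNReal.ofReal_mul hK]
  exact ENNReal.ofReal_le_ofReal (hpdf x)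

variable {g : ℝ → ℝ} {p : ℝ≥0∞} {v v' : ℝ≥0}

lemma memLp_gaussianReal_mono {m : ℝ} (hv' : v' ≠ 0) (hle : v' ≤ v)
    (hg : MemLp g p (gaussianReal m v)) : MemLp g p (gaussianReal m v') := by
  obtain rfl | hlt := hle.eq_or_lt
  · exact hg
  · obtain ⟨C, hC, hle⟩ := exists_gaussianReal_le_smul_gaussianReal m m hv' hlt
    exact hg.of_measure_le_smul hC hle

lemma memLp_comp_affine_gaussianReal {ρ : ℝ} (d : ℝ) (hv' : v' ≠ 0) (hρ : ρ ^ 2 * v' < v)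
    (hg : MemLp g p (gaussianReal 0 v)) :
    MemLp (fun s => g (ρ * s + d)) p (gaussianReal 0 v') := by
  obtain rfl | hρ0 := eq_or_ne ρ 0
  · simpa using memLp_const (g d)
  have hρ2 : NNReal.mk (ρ ^ 2) (sq_nonneg ρ) ≠ 0 :=
    fun h => pow_ne_zero 2 hρ0 (congrArg NNReal.toReal h)
  have hlaw : (gaussianReal 0 v').map (fun s => ρ * s + d) =
      gaussianReal d (NNReal.mk (ρ ^ 2) (sq_nonneg ρ) * v') := by
    rw [← Function.comp_def (· + d) (ρ * ·), ← Measure.map_map (by fun_prop) (by fun_prop),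
      gaussianReal_map_const_mul, gaussianReal_map_add_const]
    simp
  obtain ⟨C, hC, hle⟩ := exists_gaussianReal_le_smul_gaussianReal d 0
    (mul_ne_zero hρ2 hv')
    (show NNReal.mk (ρ ^ 2) (sq_nonneg ρ) * v' < v from NNReal.coe_lt_coe.1 hρ)
  exact (hg.of_measure_le_smul hC (hlaw.trans_le hle)).comp_of_map (by fun_prop)

lemma measurePreserving_of_charFunDual_comp {E F : Type*}
    [NormedAddCommGroup E] [NormedSpace ℝ E] [MeasurableSpace E] [BorelSpace E]
    [NormedAddCommGroup F] [NormedSpace ℝ F] [CompleteSpace F] [MeasurableSpace F] [BorelSpace F]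
    [SecondCountableTopology F] {μ : Measure E} [IsFiniteMeasure μ]
    {ν : Measure F} [IsFiniteMeasure ν] (T : E →L[ℝ] F)
    (h : ∀ L : StrongDual ℝ F, charFunDual μ (L.comp T) = charFunDual ν L) :
    MeasurePreserving T μ ν :=
  ⟨T.continuous.measurable,
    Measure.ext_of_charFunDual (funext fun L => by rw [charFunDual_map, h])⟩

lemma charFunDual_gaussianReal_zero (v : ℝ≥0) (L : StrongDual ℝ ℝ) :
    charFunDual (gaussianReal 0 v) L = Complex.exp (-(v / 2 * L 1 ^ 2 : ℝ)) := by
  rw [charFunDual_eq_charFun_map_one, gaussianReal_map_continuousLinearMap, charFun_gaussianReal]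
  simp [max_eq_left (sq_nonneg (L 1)), div_eq_mul_inv, mul_assoc, mul_comm,
    mul_left_comm]

lemma charFunDual_pi_gaussianReal_zero {ι : Type*} [Fintype ι] [DecidableEq ι] (v : ℝ≥0)
    (L : StrongDual ℝ (ι → ℝ)) :
    charFunDual (Measure.pi fun _ => gaussianReal 0 v) L =
      Complex.exp (-(v / 2 * ∑ i, L (Pi.single i 1) ^ 2 : ℝ)) := by
  simp [charFunDual_pi, charFunDual_gaussianReal_zero, Finset.mul_sum, ← Complex.exp_sum]

end GaussianMeasures

lemma dual_pi_prod_apply {ι : Type*} [Fintype ι] [DecidableEq ι]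
    (L : StrongDual ℝ ((ι → ℝ) × ℝ)) (θ : (ι → ℝ) × ℝ) :
    L θ = ∑ i, θ.1 i * L (Pi.single i 1, 0) + θ.2 * L (0, 1) := by
  have hθ : θ = ∑ i, θ.1 i • ((Pi.single i 1, 0) : (ι → ℝ) × ℝ) + θ.2 • (0, 1) := by
    ext j
    · simp [Prod.fst_sum, Finset.sum_apply, Pi.single_apply]
    · simp [Prod.snd_sum]
  conv_lhs => rw [hθ]
  simp only [map_add, map_sum, map_smul, smul_eq_mul]

lemma memLp_two_of_ae_integrable_add_sq {α : Type*} [MeasurableSpace α] {μ : Measure α}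
    [IsProbabilityMeasure μ] {A : α → ℝ}
    (h : ∀ᵐ t ∂μ, Integrable (fun s => (A s + A t) ^ 2) μ) : MemLp A 2 μ := by
  obtain ⟨t₀, ht₀⟩ := h.exists
  by_cases hconst : ∀ᵐ t ∂μ, A t = A t₀
  · exact (memLp_const (A t₀)).ae_eq (hconst.mono fun t ht => ht.symm)
  obtain ⟨t₁, hne, ht₁⟩ : ∃ t₁, A t₁ ≠ A t₀ ∧ Integrable (fun s => (A s + A t₁) ^ 2) μ :=
    ((not_eventually.1 hconst).and_eventually h).exists
  have hA : AEStronglyMeasurable A μ := by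
    have hdiff := ((ht₁.1.sub ht₀.1).const_mul (2 * (A t₁ - A t₀))⁻¹).sub
      (aestronglyMeasurable_const (b := (A t₁ + A t₀) / 2))
    convert hdiff using 1
    funext s
    have := sub_ne_zero.2 hne
    simp only [Pi.sub_apply]
    field_simp
    ring
  have hshift : MemLp (fun s => A s + A t₀) 2 μ :=
    (memLp_two_iff_integrable_sq (hA.add aestronglyMeasurable_const)).2 ht₀
  simpa [Pi.sub_def] using hshift.sub (memLp_const (A t₀))

lemma bsign_true : bsign true = 1 :=
  if_pos rfl

lemma bsign_false : bsign false = -1 :=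
  if_neg Bool.false_ne_true

section Peeling

variable {V : Submodule ℝ (ℝ → ℝ)} {g : ℝ → ℝ}

-- `2 g(s) = [g(s) + g(s + 2a)] + [g(s) + g(s + 2b)] - [g(s + 2a) + g(s + 2b)]`
lemma mem_of_ae_add_reflect_mem (hV : ∀ f ∈ V, ∀ d, (fun s => f (s + d)) ∈ V)
    (h : ∀ᵐ a : ℝ, (fun s => g (s + a) + g (s - a)) ∈ V) : g ∈ V := by
  obtain ⟨a, ha⟩ := h.exists
  have h' : ∀ᵐ b : ℝ, (fun s => g (s + (b - a)) + g (s - (b - a))) ∈ V :=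
    (measurePreserving_sub_right volume a).quasiMeasurePreserving.ae h
  obtain ⟨b, hb, hab⟩ := (h.and h').exists
  have hcomb := V.smul_mem (1 / 2 : ℝ)
    (V.sub_mem (V.add_mem (hV _ ha a) (hV _ hb b)) (hV _ hab (a + b)))
  convert hcomb using 1
  funext s
  simp only [Pi.smul_apply, Pi.sub_apply, Pi.add_apply, smul_eq_mul, add_sub_cancel_right]
  rw [show s + (a + b) + (b - a) = s + b + b by ring,
    show s + (a + b) - (b - a) = s + a + a by ring]
  ring

lemma sum_cube_succ {M : Type*} [AddCommMonoid M] (m : ℕ) (φ : (Fin (m + 1) → Bool) → M) :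
    ∑ x, φ x = ∑ x : Fin m → Bool, (φ (Fin.cons true x) + φ (Fin.cons false x)) := by
  rw [← (Fin.consEquiv fun _ => Bool).sum_comp, Fintype.sum_prod_type_right]
  simp [Fin.consEquiv]

lemma mem_of_ae_sum_cube_mem {μ : Measure ℝ} [SigmaFinite μ] (hμ : volume ≪ μ)
    (hV : ∀ f ∈ V, ∀ d, (fun s => f (s + d)) ∈ V) (m : ℕ)
    (h : ∀ᵐ u : Fin m → ℝ ∂Measure.pi fun _ => μ,
      (fun s => ∑ x : Fin m → Bool, g (s + ∑ i, u i * bsign (x i))) ∈ V) : g ∈ V := by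
  induction m with
  | zero =>
    rw [Measure.pi_of_empty _ 0] at h
    simpa [ae_dirac_eq] using h
  | succ m ih =>
    have hsplit : ∀ᵐ z : (Fin m → ℝ) × ℝ ∂(Measure.pi fun _ => μ).prod μ,
        (fun s => ∑ x : Fin (m + 1) → Bool,
          g (s + ∑ i, (Fin.cons z.2 z.1 : Fin (m + 1) → ℝ) i * bsign (x i))) ∈ V := by
      have hcons := (measurePreserving_piFinSuccAbove (fun _ : Fin (m + 1) => μ) 0).symm.comp
        (Measure.measurePreserving_swap (μ := Measure.pi fun _ : Fin m => μ) (ν := μ))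
      simpa [MeasurableEquiv.piFinSuccAbove, Fin.insertNthEquiv]
        using hcons.quasiMeasurePreserving.ae h
    refine ih ((Measure.ae_ae_of_ae_prod hsplit).mono fun u hu => ?_)
    refine mem_of_ae_add_reflect_mem hV ?_
    filter_upwards [hμ.ae_le hu] with a ha
    convert ha using 2 with s
    rw [sum_cube_succ, ← Finset.sum_add_distrib]
    refine Finset.sum_congr rfl fun x _ => ?_
    simp only [Fin.sum_univ_succ, Fin.cons_zero, Fin.cons_succ, bsign_true, bsign_false]
    congr 2 <;> ring

end Peeling

/-- The functions that are square-integrable against some nondegenerate centred Gaussian; the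
variance is existentially quantified, which makes the space translation-invariant. -/
def gaussianL2 : Submodule ℝ (ℝ → ℝ) where
  carrier := {g | ∃ v : ℝ≥0, v ≠ 0 ∧ MemLp g 2 (gaussianReal 0 v)}
  zero_mem' := ⟨1, one_ne_zero, MemLp.zero⟩
  add_mem' := by
    rintro g₁ g₂ ⟨v₁, hv₁, hg₁⟩ ⟨v₂, hv₂, hg₂⟩
    have hmin : min v₁ v₂ ≠ 0 := (lt_min hv₁.bot_lt hv₂.bot_lt).ne'
    exact ⟨min v₁ v₂, hmin, (memLp_gaussianReal_mono hmin (min_le_left _ _) hg₁).add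
      (memLp_gaussianReal_mono hmin (min_le_right _ _) hg₂)⟩
  smul_mem' := by
    rintro c g ⟨v, hv, hg⟩
    exact ⟨v, hv, hg.const_smul c⟩

lemma comp_add_right_mem_gaussianL2 {g : ℝ → ℝ} (hg : g ∈ gaussianL2) (d : ℝ) :
    (fun s => g (s + d)) ∈ gaussianL2 := by
  obtain ⟨v, hv, hg⟩ := hg
  have hv2 : v / 2 ≠ 0 := by positivity
  refine ⟨v / 2, hv2, ?_⟩
  simpa using memLp_comp_affine_gaussianReal (ρ := 1) d hv2
    (by simpa using NNReal.half_lt_self hv) hg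

section Bootstrap

variable {g : ℝ → ℝ} {ι : Type*} [Fintype ι] {ρ d : ι → ℝ} {i₀ : ι} {v v' w : ℝ≥0}

lemma memLp_gaussianReal_of_memLp_of_integrable_sum_comp_affine_sq (hρ₀ : ρ i₀ = 1)
    (hd₀ : d i₀ = 0) (hv' : v' ≠ 0) (hw : v' ≤ w) (hρ : ∀ i ≠ i₀, ρ i ^ 2 * v' < v)
    (hv : v ≠ 0) (hg : MemLp g 2 (gaussianReal 0 v))
    (hsum : Integrable (fun s => (∑ i, g (ρ i * s + d i)) ^ 2) (gaussianReal 0 w)) :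
    MemLp g 2 (gaussianReal 0 v') := by
  classical
  have hw₀ : w ≠ 0 := (hv'.bot_lt.trans_le hw).ne'
  have hdecomp (s : ℝ) : ∑ i, g (ρ i * s + d i) =
      g s + ∑ i ∈ univ.erase i₀, g (ρ i * s + d i) := by
    simp [hρ₀, hd₀]
  have hrest : MemLp (fun s => ∑ i ∈ univ.erase i₀, g (ρ i * s + d i)) 2 (gaussianReal 0 v') :=
    memLp_finsetSum _ fun i hi =>
      memLp_comp_affine_gaussianReal (d i) hv' (hρ i (ne_of_mem_erase hi)) hg
  have hmeas : AEStronglyMeasurable (fun s => ∑ i, g (ρ i * s + d i)) := by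
    simp only [hdecomp]
    exact (hg.1.mono_ac (gaussianReal_absolutelyContinuous' 0 hv)).add
      (hrest.1.mono_ac (gaussianReal_absolutelyContinuous' 0 hv'))
  have hall : MemLp (fun s => ∑ i, g (ρ i * s + d i)) 2 (gaussianReal 0 v') :=
    memLp_gaussianReal_mono hv' hw <| (memLp_two_iff_integrable_sq
      (hmeas.mono_ac (gaussianReal_absolutelyContinuous 0 hw₀))).2 hsum
  refine (hall.sub hrest).ae_eq (ae_of_all _ fun s => ?_)
  rw [Pi.sub_apply, hdecomp, add_sub_cancel_right]

-- A known variance `v` can be enlarged by a factor `q > 1` with `q * ρ i ^ 2 < 1` for `i ≠ i₀`,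
-- as long as it does not exceed `w`; finitely many enlargements reach `w`.
lemma memLp_gaussianReal_of_integrable_sum_comp_affine_sq (hρ₀ : ρ i₀ = 1) (hd₀ : d i₀ = 0)
    (hρ : ∀ i ≠ i₀, |ρ i| < 1) (hw : w ≠ 0) (hg : g ∈ gaussianL2)
    (hsum : Integrable (fun s => (∑ i, g (ρ i * s + d i)) ^ 2) (gaussianReal 0 w)) :
    MemLp g 2 (gaussianReal 0 w) := by
  obtain ⟨v, hv, hg⟩ := hg
  obtain ⟨q, hq, hρq⟩ : ∃ q : ℝ≥0, 1 < q ∧ ∀ i ≠ i₀, ρ i ^ 2 * q < 1 := by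
    have hnear : ∀ᶠ q : ℝ≥0 in nhdsWithin 1 (Set.Ioi 1), ∀ i ≠ i₀, ρ i ^ 2 * q < 1 := by
      refine eventually_all.2 fun i => eventually_imp_distrib_left.2 fun hi => ?_
      have hcont : Continuous fun q : ℝ≥0 => ρ i ^ 2 * q := by fun_prop
      exact nhdsWithin_le_nhds (hcont.continuousAt.eventually_lt_const
        (by simpa using (sq_lt_one_iff_abs_lt_one _).2 (hρ i hi)))
    exact (eventually_mem_nhdsWithin.and hnear).exists
  have hiter (j : ℕ) : MemLp g 2 (gaussianReal 0 (min w (q ^ j * v))) := by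
    have hpos (j : ℕ) : min w (q ^ j * v) ≠ 0 :=
      (lt_min hw.bot_lt (mul_pos (pow_pos (one_pos.trans hq) j) hv.bot_lt)).ne'
    induction j with
    | zero => exact memLp_gaussianReal_mono (hpos 0) (by simp) hg
    | succ j ih =>
      refine memLp_gaussianReal_of_memLp_of_integrable_sum_comp_affine_sq hρ₀ hd₀ (hpos _)
        (min_le_left _ _) (fun i hi => ?_) (hpos j) ih hsum
      have hle : min w (q ^ (j + 1) * v) ≤ q * min w (q ^ j * v) := by
        rw [mul_min, ← mul_assoc, ← pow_succ']
        exact min_le_min_right _ (le_mul_of_one_le_left' hq.le)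
      calc ρ i ^ 2 * (min w (q ^ (j + 1) * v) : ℝ≥0)
          ≤ ρ i ^ 2 * (q * min w (q ^ j * v) : ℝ≥0) := by gcongr
        _ = (ρ i ^ 2 * q) * (min w (q ^ j * v) : ℝ≥0) := by push_cast; ring
        _ < (min w (q ^ j * v) : ℝ≥0) :=
          mul_lt_of_lt_one_left (NNReal.coe_pos.2 (hpos j).bot_lt) (hρq i hi)
  obtain ⟨j, hj⟩ := pow_unbounded_of_one_lt (w / v) hq
  have hwle : w ≤ q ^ j * v := ((div_lt_iff₀ hv.bot_lt).1 hj).le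
  simpa [hwle] using hiter j

end Bootstrap

section Initialization

variable {n : ℕ}

/-- The pre-activation `wᵀx + b` at the input `x`, as a continuous linear function of the
parameters `θ = (w, b)`. -/
def preactivation (x : Fin n → Bool) : (Fin n → ℝ) × ℝ →L[ℝ] ℝ :=
  (∑ i, bsign (x i) • ContinuousLinearMap.proj (R := ℝ) (φ := fun _ : Fin n => ℝ) i).coprod
    (ContinuousLinearMap.id ℝ ℝ)

lemma preactivation_apply (x : Fin n → Bool) (θ : (Fin n → ℝ) × ℝ) :
    preactivation x θ = ∑ i, θ.1 i * bsign (x i) + θ.2 := by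
  simp [preactivation, mul_comm]

lemma bsign_sq (b : Bool) : bsign b ^ 2 = 1 := by
  cases b <;> simp [bsign]

instance : IsProbabilityMeasure (initMeasure n) := by
  unfold initMeasure
  infer_instance

lemma charFunDual_initMeasure (L : StrongDual ℝ ((Fin n → ℝ) × ℝ)) :
    charFunDual (initMeasure n) L = Complex.exp
      (-((n : ℝ)⁻¹ / 2 * (∑ i, L (Pi.single i 1, 0) ^ 2 + L (0, 1) ^ 2) : ℝ)) := by
  rw [initMeasure, charFunDual_prod, charFunDual_pi_gaussianReal_zero,
    charFunDual_gaussianReal_zero, ← Complex.exp_add]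
  simp [mul_add, add_comm]

lemma measurePreserving_preactivation (x : Fin n → Bool) :
    MeasurePreserving (preactivation x) (initMeasure n)
      (gaussianReal 0 ((n + 1) * (n : ℝ≥0)⁻¹)) := by
  refine measurePreserving_of_charFunDual_comp _ fun L => ?_
  have hL (a : ℝ) : L a = a * L 1 := by simpa using L.map_smul a 1
  have hweight (i : Fin n) : L (preactivation x (Pi.single i 1, 0)) ^ 2 = L 1 ^ 2 := by
    simp [preactivation_apply, Pi.single_apply, hL (bsign _), mul_pow, bsign_sq]
  have hbias : L (preactivation x (0, 1)) = L 1 := by simp [preactivation_apply]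
  rw [charFunDual_initMeasure, charFunDual_gaussianReal_zero]
  simp only [ContinuousLinearMap.comp_apply, hweight, hbias, sum_const, card_univ,
    Fintype.card_fin, nsmul_eq_mul]
  congr 1
  push_cast
  ring

/-- The change of variables `(u, s, t) ↦ (w, b)` with `w = ((s - t) / 2, u)` and
`b = (s + t) / 2`, so that `s = b + w₀` and `t = b - w₀`. -/
def mixBias (m : ℕ) : (Fin m → ℝ) × ℝ × ℝ →L[ℝ] (Fin (m + 1) → ℝ) × ℝ :=
  (ContinuousLinearMap.pi (Fin.cons
      ((2 : ℝ)⁻¹ • ((ContinuousLinearMap.fst ℝ ℝ ℝ - ContinuousLinearMap.snd ℝ ℝ ℝ) ∘L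
        ContinuousLinearMap.snd ℝ _ _))
      fun i => ContinuousLinearMap.proj i ∘L ContinuousLinearMap.fst ℝ _ _)).prod
    ((2 : ℝ)⁻¹ • ((ContinuousLinearMap.fst ℝ ℝ ℝ + ContinuousLinearMap.snd ℝ ℝ ℝ) ∘L
      ContinuousLinearMap.snd ℝ _ _))

lemma mixBias_apply (m : ℕ) (u : Fin m → ℝ) (s t : ℝ) :
    mixBias m (u, s, t) = (Fin.cons ((s - t) / 2) u, (s + t) / 2) := by
  ext i
  · induction i using Fin.cases <;> simp [mixBias, div_eq_inv_mul]
  · simp [mixBias, div_eq_inv_mul, mul_add]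

lemma measurePreserving_mixBias (m : ℕ) :
    MeasurePreserving (mixBias m)
      ((Measure.pi fun _ : Fin m => gaussianReal 0 ((m + 1 : ℕ) : ℝ≥0)⁻¹).prod
        ((gaussianReal 0 (2 * ((m + 1 : ℕ) : ℝ≥0)⁻¹)).prod
          (gaussianReal 0 (2 * ((m + 1 : ℕ) : ℝ≥0)⁻¹))))
      (initMeasure (m + 1)) := by
  refine measurePreserving_of_charFunDual_comp _ fun L => ?_
  have hu (i : Fin m) : L (mixBias m (Pi.single i 1, 0)) = L (Pi.single i.succ 1, 0) := by
    rw [Prod.zero_eq_mk, mixBias_apply, dual_pi_prod_apply]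
    simp [Fin.sum_univ_succ, Pi.single_apply]
  have hs : L (mixBias m (0, 1, 0)) = (L (Pi.single 0 1, 0) + L (0, 1)) / 2 := by
    rw [mixBias_apply, dual_pi_prod_apply]
    simp only [Fin.sum_univ_succ, Fin.cons_zero, Fin.cons_succ, Pi.zero_apply, zero_mul,
      sum_const_zero]
    ring
  have ht : L (mixBias m (0, 0, 1)) = (L (0, 1) - L (Pi.single 0 1, 0)) / 2 := by
    rw [mixBias_apply, dual_pi_prod_apply]
    simp only [Fin.sum_univ_succ, Fin.cons_zero, Fin.cons_succ, Pi.zero_apply, zero_mul,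
      sum_const_zero]
    ring
  rw [charFunDual_initMeasure, charFunDual_prod, charFunDual_prod,
    charFunDual_pi_gaussianReal_zero, charFunDual_gaussianReal_zero,
    charFunDual_gaussianReal_zero, ← Complex.exp_add, ← Complex.exp_add]
  simp only [ContinuousLinearMap.comp_apply, ContinuousLinearMap.inl_apply,
    ContinuousLinearMap.inr_apply, hu, hs, ht, Fin.sum_univ_succ]
  congr 1
  push_cast
  ring

/-- The parameters `θ` corrected along the all-ones direction so that their pre-activation at
the all-ones input becomes the prescribed value `s`. -/
def resample (n : ℕ) : ((Fin n → ℝ) × ℝ) × ℝ →L[ℝ] (Fin n → ℝ) × ℝ :=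
  ContinuousLinearMap.fst ℝ _ _ + ((n + 1 : ℝ)⁻¹ • (ContinuousLinearMap.snd ℝ _ _ -
    preactivation (fun _ => true) ∘L ContinuousLinearMap.fst ℝ _ _)).smulRight (fun _ => 1, 1)

lemma resample_apply (θ : (Fin n → ℝ) × ℝ) (s : ℝ) :
    resample n (θ, s) =
      θ + ((n + 1 : ℝ)⁻¹ * (s - preactivation (fun _ => true) θ)) • (fun _ => 1, 1) := by
  simp [resample]

lemma measurePreserving_resample :
    MeasurePreserving (resample n)
      ((initMeasure n).prod (gaussianReal 0 ((n + 1) * (n : ℝ≥0)⁻¹))) (initMeasure n) := by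
  refine measurePreserving_of_charFunDual_comp _ fun L => ?_
  set A : ℝ := ∑ i, L (Pi.single i 1, 0) + L (0, 1) with hA
  have hone : L (fun _ => 1, 1) = A := by
    rw [dual_pi_prod_apply]
    simp [hA]
  have hw (i : Fin n) : L (resample n ((Pi.single i 1, 0), 0)) =
      L (Pi.single i 1, 0) - (n + 1 : ℝ)⁻¹ * A := by
    rw [resample_apply, map_add, map_smul, hone, preactivation_apply]
    simp [bsign_true, sub_eq_add_neg]
  have hb : L (resample n ((0, 1), 0)) = L (0, 1) - (n + 1 : ℝ)⁻¹ * A := by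
    rw [resample_apply, map_add, map_smul, hone, preactivation_apply]
    simp [sub_eq_add_neg]
  have hs : L (resample n (0, 1)) = (n + 1 : ℝ)⁻¹ * A := by
    rw [resample_apply, map_add, map_smul, hone]
    simp
  rw [charFunDual_prod, charFunDual_initMeasure, charFunDual_initMeasure,
    charFunDual_gaussianReal_zero, ← Complex.exp_add]
  have hsq : ∑ i, (L (Pi.single i 1, 0) - (n + 1 : ℝ)⁻¹ * A) ^ 2 +
      (L (0, 1) - (n + 1 : ℝ)⁻¹ * A) ^ 2 + (n + 1) * ((n + 1 : ℝ)⁻¹ * A) ^ 2 =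
      ∑ i, L (Pi.single i 1, 0) ^ 2 + L (0, 1) ^ 2 := by
    simp only [sub_sq, sum_add_distrib, sum_sub_distrib, ← sum_mul, ← mul_sum, sum_const,
      card_univ, Fintype.card_fin, nsmul_eq_mul]
    rw [hA]
    field_simp
    ring
  simp only [ContinuousLinearMap.comp_apply, ContinuousLinearMap.inl_apply,
    ContinuousLinearMap.inr_apply, hw, hb, hs, ← hsq]
  congr 1
  push_cast
  ring

end Initialization

section Integrability

variable {σ : ℝ → ℝ}

lemma sum_comp_preactivation_mixBias (m : ℕ) (u : Fin m → ℝ) (s t : ℝ) :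
    ∑ x, σ (preactivation x (mixBias m (u, s, t))) =
      ∑ x : Fin m → Bool, σ (s + ∑ i, u i * bsign (x i)) +
        ∑ x : Fin m → Bool, σ (t + ∑ i, u i * bsign (x i)) := by
  rw [sum_cube_succ, ← Finset.sum_add_distrib]
  refine Finset.sum_congr rfl fun x _ => ?_
  simp only [mixBias_apply, preactivation_apply, Fin.sum_univ_succ, Fin.cons_zero, Fin.cons_succ,
    bsign_true, bsign_false]
  congr 2 <;> ring

variable {n : ℕ}

lemma mem_gaussianL2_of_integrable_sum_comp_preactivation_sq (hn : n ≠ 0)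
    (h : Integrable (fun θ => (∑ x, σ (preactivation x θ)) ^ 2) (initMeasure n)) :
    σ ∈ gaussianL2 := by
  obtain ⟨m, rfl⟩ := Nat.exists_eq_succ_of_ne_zero hn
  set v : ℝ≥0 := ((m + 1 : ℕ) : ℝ≥0)⁻¹
  have hv : v ≠ 0 := inv_ne_zero (Nat.cast_ne_zero.2 m.succ_ne_zero)
  have hmix := ((measurePreserving_mixBias m).integrable_comp h.1).2 h
  refine mem_of_ae_sum_cube_mem (gaussianReal_absolutelyContinuous' 0 hv)
    (fun _ => comp_add_right_mem_gaussianL2) m (hmix.prod_right_ae.mono fun u hu => ?_)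
  refine ⟨2 * v, mul_ne_zero two_ne_zero hv, memLp_two_of_ae_integrable_add_sq ?_⟩
  simpa only [Function.comp_def, sum_comp_preactivation_mixBias] using hu.prod_left_ae

/-- The correlation of the pre-activation at `x` with the one at the all-ones input, under the
initialization distribution. -/
def correlationWithOnes (x : Fin n → Bool) : ℝ := (n + 1 : ℝ)⁻¹ * (∑ i, bsign (x i) + 1)

lemma preactivation_resample (x : Fin n → Bool) (θ : (Fin n → ℝ) × ℝ) (s : ℝ) :
    preactivation x (resample n (θ, s)) = correlationWithOnes x * s +
      (preactivation x θ - correlationWithOnes x * preactivation (fun _ => true) θ) := by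
  have hones : preactivation x (fun _ => 1, 1) = ∑ i, bsign (x i) + 1 := by
    simp [preactivation_apply]
  rw [resample_apply, map_add, map_smul, hones, smul_eq_mul, correlationWithOnes]
  ring

lemma correlationWithOnes_true : correlationWithOnes (fun _ : Fin n => true) = 1 := by
  simpa [correlationWithOnes, bsign_true] using
    inv_mul_cancel₀ (Nat.cast_add_one_ne_zero n : (n + 1 : ℝ) ≠ 0)

lemma abs_correlationWithOnes_lt_one {x : Fin n → Bool} (hx : x ≠ fun _ => true) :
    |correlationWithOnes x| < 1 := by
  obtain ⟨j, hj⟩ := Function.ne_iff.1 hx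
  have hupper : ∑ i, bsign (x i) < ∑ _i : Fin n, (1 : ℝ) :=
    Finset.sum_lt_sum (fun i _ => by cases x i <;> norm_num [bsign_true, bsign_false])
      ⟨j, mem_univ j, by simp_all [bsign]⟩
  have hlower : ∑ _i : Fin n, (-1 : ℝ) ≤ ∑ i, bsign (x i) :=
    Finset.sum_le_sum fun i _ => by cases x i <;> norm_num [bsign_true, bsign_false]
  simp only [Finset.sum_const, card_univ, Fintype.card_fin, nsmul_eq_mul] at hupper hlower
  have hpos : (0 : ℝ) < n + 1 := by positivity
  rw [correlationWithOnes, inv_mul_eq_div, abs_lt, lt_div_iff₀ hpos, div_lt_one hpos]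
  constructor <;> linarith

lemma memLp_comp_preactivation (hn : n ≠ 0)
    (h : Integrable (fun θ => (∑ x, σ (preactivation x θ)) ^ 2) (initMeasure n))
    (x : Fin n → Bool) : MemLp (fun θ => σ (preactivation x θ)) 2 (initMeasure n) := by
  have hvar : (n + 1) * (n : ℝ≥0)⁻¹ ≠ 0 := by positivity
  have hresample := ((measurePreserving_resample (n := n)).integrable_comp h.1).2 h
  obtain ⟨θ, hθ⟩ := hresample.prod_right_ae.exists
  simp only [Function.comp_def, preactivation_resample] at hθ
  have hσ : MemLp σ 2 (gaussianReal 0 ((n + 1) * (n : ℝ≥0)⁻¹)) :=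
    memLp_gaussianReal_of_integrable_sum_comp_affine_sq correlationWithOnes_true
      (by rw [correlationWithOnes_true, one_mul, sub_self])
      (fun _ => abs_correlationWithOnes_lt_one) hvar
      (mem_gaussianL2_of_integrable_sum_comp_preactivation_sq hn h) hθ
  exact hσ.comp_measurePreserving (measurePreserving_preactivation x)

end Integrability

section Alignment

variable {n : ℕ} {σ : ℝ → ℝ}

/-- The correlation `E_x [f(x) σ(wᵀx + b)]` of `f` with the neuron of parameters `θ = (w, b)`. -/
def alignment (f : (Fin n → Bool) → ℝ) (σ : ℝ → ℝ) (θ : (Fin n → ℝ) × ℝ) : ℝ :=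
  bExp n fun x => f x * σ (preactivation x θ)

lemma INAL_eq_integral_alignment_sq (f : (Fin n → Bool) → ℝ) (σ : ℝ → ℝ) :
    INAL n f σ = ∫ θ, alignment f σ θ ^ 2 ∂initMeasure n := by
  simp only [INAL, alignment, preactivation_apply]

lemma INAL_nonneg (f : (Fin n → Bool) → ℝ) (σ : ℝ → ℝ) : 0 ≤ INAL n f σ :=
  integral_nonneg fun _ => sq_nonneg _

lemma memLp_alignment (hn : n ≠ 0) (h : INAL n (monomial n 0) σ ≠ 0) (f : (Fin n → Bool) → ℝ) :
    MemLp (alignment f σ) 2 (initMeasure n) := by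
  have hmean : Integrable (fun θ => alignment (monomial n 0) σ θ ^ 2) (initMeasure n) := by
    rw [INAL_eq_integral_alignment_sq] at h
    exact not_imp_comm.1 integral_undef h
  have hsum : Integrable (fun θ => (∑ x : Fin n → Bool, σ (preactivation x θ)) ^ 2)
      (initMeasure n) := by
    refine (hmean.const_mul ((2 ^ n) ^ 2)).congr (ae_of_all _ fun θ => ?_)
    simp [alignment, bExp, monomial, div_pow, mul_div_cancel₀]
  have hterms := memLp_finsetSum univ fun x _ =>
    (memLp_comp_preactivation hn hsum x).const_mul (f x)
  refine (hterms.const_mul (2 ^ n : ℝ)⁻¹).ae_eq (ae_of_all _ fun θ => ?_)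
  rw [alignment, bExp, div_eq_inv_mul]

section Fourier

lemma sum_chi_mul_chi (x y : Fin n → Bool) :
    ∑ S : Finset (Fin n), chi S x * chi S y = if x = y then 2 ^ n else 0 := by
  have hprod : ∑ S : Finset (Fin n), chi S x * chi S y =
      ∏ i, (1 + bsign (x i) * bsign (y i)) := by
    simp only [chi, ← Finset.prod_mul_distrib, Finset.prod_one_add, Finset.powerset_univ]
  rw [hprod]
  split_ifs with hxy
  · norm_num [hxy, ← pow_two, bsign_sq]
  · obtain ⟨i, hi⟩ := Function.ne_iff.1 hxy
    refine Finset.prod_eq_zero (Finset.mem_univ i) ?_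
    revert hi
    cases x i <;> cases y i <;> simp [bsign]

lemma sum_fourierCoef_mul_chi (f : (Fin n → Bool) → ℝ) (x : Fin n → Bool) :
    ∑ S, fourierCoef n f S * chi S x = f x := by
  calc ∑ S, fourierCoef n f S * chi S x
      = ∑ S : Finset (Fin n), ∑ y, f y / 2 ^ n * (chi S y * chi S x) := by
        simp only [fourierCoef, bExp, Finset.sum_div, Finset.sum_mul]
        refine Finset.sum_congr rfl fun S _ => Finset.sum_congr rfl fun y _ => ?_
        ring
    _ = ∑ y, f y / 2 ^ n * ∑ S : Finset (Fin n), chi S y * chi S x := by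
        rw [Finset.sum_comm]
        simp only [Finset.mul_sum]
    _ = f x := by simp [sum_chi_mul_chi]

lemma alignment_eq_sum_fourierCoef (f : (Fin n → Bool) → ℝ) (σ : ℝ → ℝ) (θ : (Fin n → ℝ) × ℝ) :
    alignment f σ θ = ∑ S, fourierCoef n f S * alignment (chi S) σ θ := by
  calc alignment f σ θ
      = (∑ x, ∑ S, fourierCoef n f S * (chi S x * σ (preactivation x θ))) / 2 ^ n := by
        simp only [alignment, bExp, ← mul_assoc, ← Finset.sum_mul, sum_fourierCoef_mul_chi]
    _ = ∑ S, fourierCoef n f S * alignment (chi S) σ θ := by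
        rw [Finset.sum_comm, Finset.sum_div]
        simp only [alignment, bExp, ← Finset.mul_sum, mul_div_assoc]

end Fourier

section Symmetry

lemma bExp_comp_perm (e : Equiv.Perm (Fin n → Bool)) (g : (Fin n → Bool) → ℝ) :
    bExp n (fun x => g (e x)) = bExp n g := by
  rw [bExp, bExp, Equiv.sum_comp e g]

/-- The sign change `x ↦ x y` of the Boolean cube; in the Boolean encoding of signs, the product
is `==`. -/
def flipSigns (y : Fin n → Bool) : Equiv.Perm (Fin n → Bool) :=
  Function.Involutive.toPerm (fun x i => x i == y i) fun x => by simp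

lemma flipSigns_apply (x y : Fin n → Bool) (i : Fin n) : flipSigns y x i = (x i == y i) :=
  rfl

/-- The sign change `(w, b) ↦ (w y, b)` of the weights, with the entrywise product. -/
def flipWeights (y : Fin n → Bool) : (Fin n → ℝ) × ℝ ≃ᵐ (Fin n → ℝ) × ℝ :=
  MeasurableEquiv.ofInvolutive (fun θ => (fun i => θ.1 i * bsign (y i), θ.2))
    (fun θ => by simp [mul_assoc, ← pow_two, bsign_sq]) (by fun_prop)

lemma bsign_beq (a b : Bool) : bsign (a == b) = bsign a * bsign b := by
  cases a <;> cases b <;> simp [bsign]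

lemma chi_flipSigns (S : Finset (Fin n)) (x y : Fin n → Bool) :
    chi S (flipSigns y x) = chi S y * chi S x := by
  simp [chi, flipSigns_apply, bsign_beq, Finset.prod_mul_distrib, mul_comm]

lemma preactivation_flipWeights (x y : Fin n → Bool) (θ : (Fin n → ℝ) × ℝ) :
    preactivation x (flipWeights y θ) = preactivation (flipSigns y x) θ := by
  simp [preactivation_apply, flipWeights, flipSigns_apply, bsign_beq, mul_assoc, mul_comm]

lemma alignment_chi_flipWeights (S : Finset (Fin n)) (y : Fin n → Bool) (θ : (Fin n → ℝ) × ℝ) :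
    chi S y * alignment (chi S) σ (flipWeights y θ) = alignment (chi S) σ θ := by
  conv_rhs => rw [alignment, ← bExp_comp_perm (flipSigns y)]
  simp only [alignment, preactivation_flipWeights, chi_flipSigns, bExp, mul_assoc, ← mul_div_assoc,
    Finset.mul_sum]

lemma measurePreserving_flipWeights (y : Fin n → Bool) :
    MeasurePreserving (flipWeights y) (initMeasure n) (initMeasure n) := by
  refine MeasurePreserving.prod (f := fun (w : Fin n → ℝ) i => w i * bsign (y i))
    (measurePreserving_pi _ _ (f := fun i w => w * bsign (y i)) fun i => ⟨by fun_prop, ?_⟩)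
    (MeasurePreserving.id _)
  rw [gaussianReal_map_mul_const]
  congr 1
  · simp
  · ext
    simp [bsign_sq]

lemma exists_chi_mul_chi_eq_neg_one {S T : Finset (Fin n)} (hST : S ≠ T) :
    ∃ y, chi S y * chi T y = -1 := by
  obtain ⟨i, hi⟩ : ∃ i, ¬(i ∈ S ↔ i ∈ T) := not_forall.1 fun hmem => hST (Finset.ext hmem)
  have hchi (U : Finset (Fin n)) : chi U (fun j => decide (j ≠ i)) = if i ∈ U then -1 else 1 := by
    simp [chi, bsign]
  refine ⟨fun j => decide (j ≠ i), ?_⟩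
  rw [hchi, hchi]
  split_ifs <;> simp_all

lemma integral_alignment_chi_mul_alignment_chi_eq_zero {S T : Finset (Fin n)} (hST : S ≠ T) :
    ∫ θ, alignment (chi S) σ θ * alignment (chi T) σ θ ∂initMeasure n = 0 := by
  obtain ⟨y, hy⟩ := exists_chi_mul_chi_eq_neg_one hST
  have hflip (θ : (Fin n → ℝ) × ℝ) : alignment (chi S) σ θ * alignment (chi T) σ θ =
      -(alignment (chi S) σ (flipWeights y θ) * alignment (chi T) σ (flipWeights y θ)) := by
    rw [← alignment_chi_flipWeights S y, ← alignment_chi_flipWeights T y, mul_mul_mul_comm, hy,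
      neg_one_mul]
  have hneg := (measurePreserving_flipWeights y).integral_comp'
    (g := fun θ => -(alignment (chi S) σ θ * alignment (chi T) σ θ))
  simp only [← hflip, integral_neg] at hneg
  linarith

lemma INAL_eq_sum_fourierCoef_sq_mul
    (h : ∀ S : Finset (Fin n), MemLp (alignment (chi S) σ) 2 (initMeasure n))
    (f : (Fin n → Bool) → ℝ) :
    INAL n f σ = ∑ S, fourierCoef n f S ^ 2 * INAL n (chi S) σ := by
  have hint (S T : Finset (Fin n)) : Integrable (fun θ => fourierCoef n f S * fourierCoef n f T *
      (alignment (chi S) σ θ * alignment (chi T) σ θ)) (initMeasure n) :=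
    ((h S).integrable_mul (h T)).const_mul _
  have hsq (θ : (Fin n → ℝ) × ℝ) : alignment f σ θ ^ 2 = ∑ S, ∑ T,
      fourierCoef n f S * fourierCoef n f T *
        (alignment (chi S) σ θ * alignment (chi T) σ θ) := by
    rw [alignment_eq_sum_fourierCoef, pow_two, Finset.sum_mul_sum]
    simp only [mul_mul_mul_comm]
  simp only [INAL_eq_integral_alignment_sq, hsq]
  rw [integral_finsetSum _ fun S _ => integrable_finsetSum _ fun T _ => hint S T]
  refine Finset.sum_congr rfl fun S _ => ?_
  rw [integral_finsetSum _ fun T _ => hint S T, Finset.sum_eq_single S]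
  · simp only [integral_const_mul, pow_two]
  · intro T _ hTS
    rw [integral_const_mul, integral_alignment_chi_mul_alignment_chi_eq_zero hTS.symm, mul_zero]
  · simp

/-- The permutation of the weights by `e`, leaving the bias alone. -/
def permuteWeights (e : Equiv.Perm (Fin n)) : (Fin n → ℝ) × ℝ ≃ᵐ (Fin n → ℝ) × ℝ :=
  (MeasurableEquiv.piCongrLeft (fun _ => ℝ) e).prodCongr (MeasurableEquiv.refl ℝ)

lemma measurePreserving_permuteWeights (e : Equiv.Perm (Fin n)) :
    MeasurePreserving (permuteWeights e) (initMeasure n) (initMeasure n) :=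
  (measurePreserving_piCongrLeft (fun _ => gaussianReal 0 (n : ℝ≥0)⁻¹) e).prod
    (MeasurePreserving.id _)

lemma preactivation_permuteWeights (e : Equiv.Perm (Fin n)) (x : Fin n → Bool)
    (θ : (Fin n → ℝ) × ℝ) :
    preactivation x (permuteWeights e θ) = preactivation (x ∘ e) θ := by
  have hweights (i : Fin n) : (permuteWeights e θ).1 (e i) = θ.1 i :=
    Equiv.piCongrLeft_apply_apply (fun _ => ℝ) e θ.1 i
  rw [preactivation_apply, preactivation_apply, 
    ← Equiv.sum_comp e fun i => (permuteWeights e θ).1 i * bsign (x i)]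
  simp only [hweights, Function.comp_apply]
  rfl

lemma INAL_comp_perm (e : Equiv.Perm (Fin n)) (f : (Fin n → Bool) → ℝ) (σ : ℝ → ℝ) :
    INAL n (fun x => f (x ∘ e)) σ = INAL n f σ := by
  have halign (θ : (Fin n → ℝ) × ℝ) :
      alignment (fun x => f (x ∘ e)) σ (permuteWeights e θ) = alignment f σ θ := by
    simp only [alignment, preactivation_permuteWeights]
    exact bExp_comp_perm (e.symm.arrowCongr (Equiv.refl Bool)) fun x => f x * σ (preactivation x θ)
  rw [INAL_eq_integral_alignment_sq, INAL_eq_integral_alignment_sq,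
    ← (measurePreserving_permuteWeights e).integral_comp']
  simp only [halign]

lemma INAL_chi_eq_of_card_eq {S T : Finset (Fin n)} (hcard : S.card = T.card) (σ : ℝ → ℝ) :
    INAL n (chi S) σ = INAL n (chi T) σ := by
  set e : Equiv.Perm (Fin n) := (Finset.equivOfCardEq hcard).extendSubtype
  have hmap : S.map e.toEmbedding = T := by
    refine Finset.eq_of_subset_of_card_le (fun j hj => ?_) (by simp [hcard])
    obtain ⟨i, hi, rfl⟩ := Finset.mem_map.1 hj
    exact (Finset.equivOfCardEq hcard).extendSubtype_mem i hi
  have hchi : chi T = fun x => chi S (x ∘ e) := by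
    funext x
    rw [← hmap, chi, Finset.prod_map]
    rfl
  rw [hchi, INAL_comp_perm]

end Symmetry

lemma mul_weightLE_le_INAL {k : ℕ} {ε : ℝ} (hn : n ≠ 0) (hkn : k ≤ n) (hε : 0 < ε)
    (h : ∀ k' ≤ k, ε ≤ INAL n (monomial n k') σ) (f : (Fin n → Bool) → ℝ) :
    ε * weightLE n k f ≤ INAL n f σ := by
  have hchi {S : Finset (Fin n)} (hS : S.card ≤ k) : ε ≤ INAL n (chi S) σ := by
    have hcard : (univ.filter fun i : Fin n => (i : ℕ) < S.card).card = S.card := by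
      rw [Fin.card_filter_val_lt, min_eq_right (hS.trans hkn)]
    exact (h _ hS).trans_eq (INAL_chi_eq_of_card_eq hcard σ)
  calc ε * weightLE n k f
      = ∑ S with S.card ≤ k, fourierCoef n f S ^ 2 * ε := by
        rw [weightLE, mul_comm, Finset.sum_mul]
    _ ≤ ∑ S with S.card ≤ k, fourierCoef n f S ^ 2 * INAL n (chi S) σ :=
        Finset.sum_le_sum fun S hS =>
          mul_le_mul_of_nonneg_left (hchi (Finset.mem_filter.1 hS).2) (sq_nonneg _)
    _ ≤ ∑ S, fourierCoef n f S ^ 2 * INAL n (chi S) σ :=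
        Finset.sum_le_univ_sum_of_nonneg fun S => mul_nonneg (sq_nonneg _) (INAL_nonneg _ _)
    _ = INAL n f σ :=
        (INAL_eq_sum_fourierCoef_sq_mul
          (fun S => memLp_alignment hn (hε.trans_le (h 0 k.zero_le)).ne' _) f).symm

end Alignment

/-- If `INAL(M_{k'}, σ) = Ω(n^{-k₀})` for all `k' = 0, …, k`, then
`W^{≤k}(f_n) ≤ INAL(f_n, σ) · O(n^{k₀})`. -/
theorem low_degree_weight_le_inal
    (σ : ℝ → ℝ) (k k₀ : ℕ)
    (h : ∀ k' : ℕ, k' ≤ k →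
      (fun n : ℕ => ((n : ℝ) ^ k₀)⁻¹) =O[atTop] fun n : ℕ => INAL n (monomial n k') σ)
    (f : ∀ n : ℕ, (Fin n → Bool) → ℝ) :
    (fun n : ℕ => weightLE n k (f n)) =O[atTop]
      fun n : ℕ => INAL n (f n) σ * (n : ℝ) ^ k₀ := by
  obtain ⟨C, hbigO, hC⟩ := (((eventually_all_finite (Set.finite_Iic k)).2 fun k' hk' =>
    isBigO_iff_eventually_isBigOWith.1 (h k' hk')).and (eventually_gt_atTop 0)).exists
  refine IsBigO.of_bound C ?_
  filter_upwards [(eventually_all_finite (Set.finite_Iic k)).2 fun k' hk' => (hbigO k' hk').bound,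
    eventually_ge_atTop k, eventually_gt_atTop 0] with n hbound hkn hn
  have hmonomial : ∀ k' ≤ k, C⁻¹ * ((n : ℝ) ^ k₀)⁻¹ ≤ INAL n (monomial n k') σ := by
    intro k' hk'
    rw [inv_mul_le_iff₀ hC]
    simpa [abs_of_nonneg (INAL_nonneg _ _)] using hbound k' hk'
  have hweight : 0 ≤ weightLE n k (f n) := Finset.sum_nonneg fun S _ => sq_nonneg _
  have hINAL : 0 ≤ INAL n (f n) σ * (n : ℝ) ^ k₀ := mul_nonneg (INAL_nonneg _ _) (by positivity)
  rw [Real.norm_of_nonneg hweight, Real.norm_of_nonneg hINAL]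
  calc weightLE n k (f n)
      = C * (C⁻¹ * ((n : ℝ) ^ k₀)⁻¹ * weightLE n k (f n) * (n : ℝ) ^ k₀) := by field_simp
    _ ≤ C * (INAL n (f n) σ * (n : ℝ) ^ k₀) := by
        gcongr
        exact mul_weightLE_le_INAL hn.ne' hkn (by positivity) hmonomial (f n)
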